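/- arXiv:2507.07853 — 4 statements merged into one kernel-verified Lean document; each statement's English description precedes it below -/
import Mathlib

section
/- Let C be a lower-triangular d×d real matrix with ξ_l ≤ ‖C‖_F ≤ ξ_u and CCᵀ ≽ λ_min·I, where 0 < ξ_l ≤ ξ_u < ∞ and 0 < λ_min ≤ 1. Then the matrix L·N·Lᵀ is invertible, and the block-diagonal symmetric matrix F⁻¹ on ℝ^d ⊕ ℝ^p whose first block is CCᵀ and whose second block is F_C⁻¹ := (1/2)·L(I_d ⊗ C)Lᵀ·(L N Lᵀ)⁻¹·L(I_d ⊗ Cᵀ)Lᵀ satisfies λ_min^g · I ≼ F⁻¹ ≼ λ_max^g · I, where λ_min^g = min{λ_min, λ_min²/2} and λ_max^g = ξ_u². -/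
open Matrix

noncomputable section

/-- Frobenius norm of a square real matrix. -/
def frob {d : ℕ} (A : Matrix (Fin d) (Fin d) ℝ) : ℝ :=
  Real.sqrt (∑ i, ∑ j, (A i j) ^ 2)

/-- Index set for `ℝ^p`, `p = d(d+1)/2`: pairs `(i,j)` with `j ≤ i`. -/
abbrev LowIdx (d : ℕ) := {p : Fin d × Fin d // p.2 ≤ p.1}

/-- The commutation matrix `K`, with `K_{(i,j),(k,l)} = 1` iff `(k,l) = (j,i)`. -/
def commK (d : ℕ) : Matrix (Fin d × Fin d) (Fin d × Fin d) ℝ :=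
  fun p q => if q = (p.2, p.1) then 1 else 0

/-- The elimination matrix `L`, with `L_{(i,j),(k,l)} = 1` iff `(k,l) = (i,j)`. -/
def elimL (d : ℕ) : Matrix (LowIdx d) (Fin d × Fin d) ℝ :=
  fun q p => if p = q.1 then 1 else 0

/-- `N = (K + I)/2`. -/
def matN (d : ℕ) : Matrix (Fin d × Fin d) (Fin d × Fin d) ℝ := (2 : ℝ)⁻¹ • (commK d + 1)

/-- Kronecker product `I_d ⊗ C`: `(I_d ⊗ C)_{(i,j),(k,l)} = C_{ik}` if `j = l`, else `0`,
so that `(I_d ⊗ C)·vec(A) = vec(CA)`. -/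
def kronIC {d : ℕ} (C : Matrix (Fin d) (Fin d) ℝ) :
    Matrix (Fin d × Fin d) (Fin d × Fin d) ℝ :=
  fun p q => if p.2 = q.2 then C p.1 q.1 else 0

open scoped Kronecker in
lemma kronIC_eq {d : ℕ} (C : Matrix (Fin d) (Fin d) ℝ) : kronIC C = C ⊗ₖ (1 : Matrix (Fin d) (Fin d) ℝ) := by
  ext ⟨i, j⟩ ⟨k, l⟩
  simp [kronIC, Matrix.kroneckerMap_apply, Matrix.one_apply]

lemma kronIC_psd {d : ℕ} {C : Matrix (Fin d) (Fin d) ℝ} (h : C.PosSemidef) :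
    (kronIC C).PosSemidef := by
  rw [kronIC_eq]
  exact h.kronecker Matrix.PosSemidef.one

lemma elim_conj {d : ℕ} (B : Matrix (Fin d × Fin d) (Fin d × Fin d) ℝ) :
    elimL d * B * (elimL d)ᵀ = B.submatrix Subtype.val Subtype.val := by
  ext q r
  simp [Matrix.mul_apply, elimL]

lemma matN_conj (d : ℕ) : elimL d * matN d * (elimL d)ᵀ =
    Matrix.diagonal (fun q : LowIdx d => if q.1.1 = q.1.2 then (1 : ℝ) else 2⁻¹) := by
  rw [elim_conj]
  ext ⟨⟨i, j⟩, h⟩ ⟨⟨k, l⟩, h'⟩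
  simp only [matN, commK, Matrix.submatrix_apply, Matrix.smul_apply, Matrix.add_apply,
    Matrix.one_apply, Matrix.diagonal_apply, Subtype.mk.injEq, Prod.mk.injEq, smul_eq_mul]
  simp only at h h'
  by_cases h1 : i = k ∧ j = l
  · obtain ⟨rfl, rfl⟩ := h1
    by_cases h2 : i = j
    · subst h2; norm_num
    · simp [h2, Ne.symm h2]
  · have h3 : ¬ (k = j ∧ l = i) := by
      rintro ⟨rfl, rfl⟩
      exact h1 ⟨le_antisymm h' h, le_antisymm h h'⟩
    simp [h1, h3]

lemma swap_lower {n : Type*} [Fintype n] [DecidableEq n] (A : Matrix n n ℝ) (c : ℝ) (hc : 0 < c)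
    (h : (A * Aᵀ - c • (1 : Matrix n n ℝ)).PosSemidef) :
    (Aᵀ * A - c • (1 : Matrix n n ℝ)).PosSemidef := by
  have hpd : (A * Aᵀ).PosDef := by
    have := Matrix.PosDef.posSemidef_add h ((Matrix.PosDef.one (n := n) (R := ℝ)).smul hc)
    simpa using this
  have hu : IsUnit A := by
    have := hpd.isUnit
    rw [Matrix.isUnit_iff_isUnit_det] at this ⊢
    rw [Matrix.det_mul] at this
    exact isUnit_of_mul_isUnit_left this
  rw [← hu.posSemidef_star_right_conjugate_iff]
  have h1 := (Matrix.posSemidef_conjTranspose_mul_self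
    (A * Aᵀ - c • (1 : Matrix n n ℝ))).add (h.smul hc.le)
  convert h1 using 1
  rw [h.1.eq]
  simp only [Matrix.star_eq_conjTranspose, Matrix.conjTranspose_eq_transpose_of_trivial,
    Matrix.mul_sub, Matrix.sub_mul, Matrix.mul_assoc, smul_sub, Matrix.smul_mul, Matrix.mul_smul,
    Matrix.mul_one, Matrix.one_mul]
  abel

lemma swap_upper {n : Type*} [Fintype n] [DecidableEq n] (A : Matrix n n ℝ) (c : ℝ) (hc : 0 < c)
    (h : (c • (1 : Matrix n n ℝ) - Aᵀ * A).PosSemidef) :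
    (c • (1 : Matrix n n ℝ) - A * Aᵀ).PosSemidef := by
  have h0 : (c • (1 : Matrix n n ℝ) - A * Aᵀ)ᴴ = c • (1 : Matrix n n ℝ) - A * Aᵀ := by
    simp [Matrix.conjTranspose_eq_transpose_of_trivial]
  have h1 := ((Matrix.posSemidef_conjTranspose_mul_self
    (c • (1 : Matrix n n ℝ) - A * Aᵀ)).add (h.mul_mul_conjTranspose_same A)).smul
      (inv_nonneg.2 hc.le)
  convert h1 using 1
  rw [h0, eq_inv_smul_iff₀ hc.ne']
  simp only [Matrix.conjTranspose_eq_transpose_of_trivial,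
    Matrix.mul_sub, Matrix.sub_mul, Matrix.mul_assoc, smul_sub, Matrix.smul_mul, Matrix.mul_smul,
    Matrix.mul_one, Matrix.one_mul]
  abel

lemma gram_low {d : ℕ} (C : Matrix (Fin d) (Fin d) ℝ) (hlow : ∀ i j : Fin d, i < j → C i j = 0) :
    ((kronIC C).submatrix (Subtype.val : LowIdx d → _) (Subtype.val : LowIdx d → _))ᵀ *
      (kronIC C).submatrix (Subtype.val : LowIdx d → _) (Subtype.val : LowIdx d → _) =
    (kronIC (Cᵀ * C)).submatrix Subtype.val Subtype.val := by
  have hG : (kronIC C)ᵀ * kronIC C = kronIC (Cᵀ * C) := by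
    rw [kronIC_eq, kronIC_eq, ← Matrix.kroneckerMap_transpose, ← Matrix.mul_kronecker_mul]
    simp
  rw [← hG]
  ext r s
  simp only [Matrix.mul_apply, Matrix.transpose_apply, Matrix.submatrix_apply]
  have hz : ∀ q : Fin d × Fin d, ¬ q.2 ≤ q.1 → kronIC C q r.1 * kronIC C q s.1 = 0 := by
    intro q hq
    have : kronIC C q r.1 = 0 := by
      simp only [kronIC]
      split_ifs with h
      · apply hlow
        have := r.2
        rw [← h] at this
        exact (not_le.1 hq).trans_le this
      · rfl
    rw [this, zero_mul]
  rw [← Finset.sum_filter_of_ne (p := fun q : Fin d × Fin d => q.2 ≤ q.1)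
    (fun q _ hq => by by_contra h; exact hq (hz q h))]
  rw [← Finset.sum_subtype_eq_sum_filter]
  simp

lemma frob_bound {d : ℕ} (C : Matrix (Fin d) (Fin d) ℝ) (c : ℝ) (hc : 0 ≤ c) (h : frob C ≤ c) :
    (c ^ 2 • (1 : Matrix (Fin d) (Fin d) ℝ) - Cᵀ * C).PosSemidef := by
  have h2 : ∑ i, ∑ j, (C i j) ^ 2 ≤ c ^ 2 := by
    unfold frob at h
    exact (Real.sqrt_le_left hc).1 h
  refine .of_dotProduct_mulVec_nonneg ?_ fun x => ?_
  · simp [Matrix.IsHermitian, Matrix.conjTranspose_eq_transpose_of_trivial]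
  · have e : star x ⬝ᵥ ((c ^ 2 • (1 : Matrix (Fin d) (Fin d) ℝ) - Cᵀ * C) *ᵥ x) =
        c ^ 2 * ∑ j, x j ^ 2 - ∑ i, (∑ j, C i j * x j) ^ 2 := by
      rw [Matrix.sub_mulVec, dotProduct_sub, ← Matrix.mulVec_mulVec, Matrix.dotProduct_mulVec _ Cᵀ,
        Matrix.vecMul_transpose, Matrix.smul_mulVec, Matrix.one_mulVec, dotProduct_smul]
      simp [dotProduct, Matrix.mulVec, sq]
    rw [e]
    have hs : ∑ i, (∑ j, C i j * x j) ^ 2 ≤ ∑ i, (∑ j, C i j ^ 2) * ∑ j, x j ^ 2 :=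
      Finset.sum_le_sum fun i _ => Finset.sum_mul_sq_le_sq_mul_sq _ _ _
    rw [← Finset.sum_mul] at hs
    have := mul_le_mul_of_nonneg_right h2 (Finset.sum_nonneg fun j (_ : j ∈ Finset.univ) => sq_nonneg (x j))
    linarith

lemma block_psd {m n : Type*} [Fintype m] [Fintype n] {A : Matrix m m ℝ} {D : Matrix n n ℝ}
    (hA : A.PosSemidef) (hD : D.PosSemidef) : (Matrix.fromBlocks A 0 0 D).PosSemidef := by
  refine .of_dotProduct_mulVec_nonneg ?_ fun x => ?_
  · exact Matrix.IsHermitian.fromBlocks hA.1 (by simp) hD.1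
  · rw [← Sum.elim_comp_inl_inr x, Matrix.fromBlocks_mulVec]
    have h1 := hA.dotProduct_mulVec_nonneg (x ∘ Sum.inl)
    have h2 := hD.dotProduct_mulVec_nonneg (x ∘ Sum.inr)
    simp only [star_trivial] at *
    rw [sumElim_dotProduct_sumElim]
    simpa using add_nonneg h1 h2

/-- eigenvalue bounds for the inverse Fisher information matrix in square-root
parameterization.  If `C` is lower triangular with `ξ_l ≤ ‖C‖_F ≤ ξ_u` and `CCᵀ ≽ λ_min·I`
(`0 < ξ_l ≤ ξ_u`, `0 < λ_min ≤ 1`), then `L N Lᵀ` is invertible and the block-diagonal matrix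
`F⁻¹ = diag(CCᵀ, F_C⁻¹)`, with
`F_C⁻¹ = (1/2)·L(I_d ⊗ C)Lᵀ·(L N Lᵀ)⁻¹·L(I_d ⊗ Cᵀ)Lᵀ`, satisfies
`min{λ_min, λ_min²/2}·I ≼ F⁻¹ ≼ ξ_u²·I`. -/
theorem inverse_FIM_eigenvalue_bounds {d : ℕ} (hd : 1 ≤ d)
    (C : Matrix (Fin d) (Fin d) ℝ)
    (hlow : ∀ i j : Fin d, i < j → C i j = 0)
    (ξl ξu lam : ℝ) (hξl : 0 < ξl) (hξ : ξl ≤ ξu)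
    (hfl : ξl ≤ frob C) (hfu : frob C ≤ ξu)
    (hlam0 : 0 < lam) (hlam1 : lam ≤ 1)
    (hpsd : (C * Cᵀ - lam • (1 : Matrix (Fin d) (Fin d) ℝ)).PosSemidef)
    (FC : Matrix (LowIdx d) (LowIdx d) ℝ)
    (hFC : FC = (2 : ℝ)⁻¹ •
      (elimL d * kronIC C * (elimL d)ᵀ * (elimL d * matN d * (elimL d)ᵀ)⁻¹ *
        (elimL d * kronIC Cᵀ * (elimL d)ᵀ)))
    (Finv : Matrix (Fin d ⊕ LowIdx d) (Fin d ⊕ LowIdx d) ℝ)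
    (hFinv : Finv = Matrix.fromBlocks (C * Cᵀ) 0 0 FC) :
    IsUnit (elimL d * matN d * (elimL d)ᵀ) ∧
    (Finv - min lam (lam ^ 2 / 2) •
      (1 : Matrix (Fin d ⊕ LowIdx d) (Fin d ⊕ LowIdx d) ℝ)).PosSemidef ∧
    (ξu ^ 2 • (1 : Matrix (Fin d ⊕ LowIdx d) (Fin d ⊕ LowIdx d) ℝ) - Finv).PosSemidef := by
  have hc : 0 < ξu := hξl.trans_le hξ
  have hcu : 0 < ξu ^ 2 := by positivity
  have hU1 := frob_bound C ξu hc.le hfu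
  have hU2 := swap_upper C _ hcu hU1
  have hL1 := swap_lower C lam hlam0 hpsd
  rw [matN_conj, elim_conj, elim_conj] at hFC
  rw [matN_conj]
  have hM : Matrix.diagonal (fun q : LowIdx d => if q.1.1 = q.1.2 then (1 : ℝ) else 2⁻¹) *
      Matrix.diagonal (fun q : LowIdx d => if q.1.1 = q.1.2 then (1 : ℝ) else 2) = 1 := by
    rw [Matrix.diagonal_mul_diagonal, ← Matrix.diagonal_one]
    congr 1
    ext q
    split_ifs <;> norm_num
  rw [Matrix.inv_eq_right_inv hM] at hFC
  set D := Matrix.diagonal (fun q : LowIdx d => if q.1.1 = q.1.2 then (1 : ℝ) else 2) with hD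
  have hD1 : (D - 1).PosSemidef := by
    rw [hD, ← Matrix.diagonal_one, Matrix.diagonal_sub]
    refine .diagonal fun q => ?_
    simp only [Pi.zero_apply]
    split_ifs <;> norm_num
  have hD2 : ((2 : ℝ) • (1 : Matrix (LowIdx d) (LowIdx d) ℝ) - D).PosSemidef := by
    rw [hD, ← Matrix.diagonal_one, ← Matrix.diagonal_smul, Matrix.diagonal_sub]
    refine .diagonal fun q => ?_
    simp only [Pi.zero_apply, Pi.smul_apply, smul_eq_mul]
    split_ifs <;> norm_num
  have hG := gram_low C hlow
  set A := (kronIC C).submatrix (Subtype.val : LowIdx d → _) (Subtype.val : LowIdx d → _) with hA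
  have hAt : (kronIC Cᵀ).submatrix (Subtype.val : LowIdx d → _) (Subtype.val : LowIdx d → _) = Aᵀ := by
    ext r s
    simp [hA, kronIC, eq_comm]
  rw [hAt] at hFC
  have hone (c : ℝ) : (kronIC (c • (1 : Matrix (Fin d) (Fin d) ℝ))).submatrix
      (Subtype.val : LowIdx d → _) (Subtype.val : LowIdx d → _) = c • 1 := by
    rw [kronIC_eq, Matrix.smul_kronecker, Matrix.one_kronecker_one]
    ext r s
    simp [Matrix.one_apply, Subtype.ext_iff]
  have hsub (X Y : Matrix (Fin d) (Fin d) ℝ) : kronIC (X - Y) = kronIC X - kronIC Y := by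
    ext r s
    simp only [kronIC, Matrix.sub_apply]
    split_ifs <;> simp
  have hA1 : (Aᵀ * A - lam • (1 : Matrix (LowIdx d) (LowIdx d) ℝ)).PosSemidef := by
    have := (kronIC_psd hL1).submatrix (Subtype.val : LowIdx d → _)
    rwa [hsub, Matrix.submatrix_sub, Pi.sub_apply, Pi.sub_apply, hone, ← hG] at this
  have hA2 : (ξu ^ 2 • (1 : Matrix (LowIdx d) (LowIdx d) ℝ) - Aᵀ * A).PosSemidef := by
    have := (kronIC_psd hU1).submatrix (Subtype.val : LowIdx d → _)
    rwa [hsub, Matrix.submatrix_sub, Pi.sub_apply, Pi.sub_apply, hone, ← hG] at this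
  have hA3 := swap_upper A _ hcu hA2
  have hA4 : (A * Aᵀ - lam • (1 : Matrix (LowIdx d) (LowIdx d) ℝ)).PosSemidef := by
    have := swap_lower Aᵀ lam hlam0 (by rwa [Matrix.transpose_transpose])
    rwa [Matrix.transpose_transpose] at this
  have hmin1 : 0 ≤ lam - min lam (lam ^ 2 / 2) := sub_nonneg.2 (min_le_left _ _)
  have hmin2 : 0 ≤ lam / 2 - min lam (lam ^ 2 / 2) := by
    have := min_le_right lam (lam ^ 2 / 2)
    nlinarith
  generalize min lam (lam ^ 2 / 2) = μ at *
  refine ⟨?_, ?_, ?_⟩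
  · exact IsUnit.of_mul_eq_one _ hM
  · rw [hFinv, ← Matrix.fromBlocks_one, Matrix.fromBlocks_smul, sub_eq_add_neg, Matrix.fromBlocks_neg,
      Matrix.fromBlocks_add]
    simp only [smul_zero, neg_zero, add_zero, ← sub_eq_add_neg]
    refine block_psd ?_ ?_
    · convert hpsd.add (Matrix.PosSemidef.one.smul hmin1) using 1
      module
    · have h2 : (0 : ℝ) ≤ 2⁻¹ := by norm_num
      convert (((hD1.mul_mul_conjTranspose_same A).add hA4).smul h2).add
        (Matrix.PosSemidef.one.smul hmin2) using 1
      rw [hFC]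
      simp only [Matrix.conjTranspose_eq_transpose_of_trivial, Matrix.mul_sub, Matrix.sub_mul,
        Matrix.mul_one]
      module
  · rw [hFinv, ← Matrix.fromBlocks_one, Matrix.fromBlocks_smul, sub_eq_add_neg, Matrix.fromBlocks_neg,
      Matrix.fromBlocks_add]
    simp only [smul_zero, neg_zero, add_zero, ← sub_eq_add_neg]
    refine block_psd hU2 ?_
    have h2 : (0 : ℝ) ≤ 2⁻¹ := by norm_num
    convert hA3.add ((hD2.mul_mul_conjTranspose_same A).smul h2) using 1
    rw [hFC]
    simp only [Matrix.conjTranspose_eq_transpose_of_trivial, Matrix.mul_sub, Matrix.sub_mul,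
      Matrix.mul_smul, Matrix.smul_mul, Matrix.mul_one]
    module

end
end

section
/- For any real d×d matrices C and K, the Frobenius norm bound ‖C · tril[Cᵀ K]‖_F ≤ √(5/2) · ‖C‖_F² · ‖K‖_F holds. -/
open Matrix

noncomputable section

/-- `tril A` takes the strictly lower-triangular part of `A` and halves its diagonal. -/
def tril {d : ℕ} (A : Matrix (Fin d) (Fin d) ℝ) : Matrix (Fin d) (Fin d) ℝ :=
  fun i j => if (j : ℕ) < (i : ℕ) then A i j else if (i : ℕ) = (j : ℕ) then A i j / 2 else 0

theorem frob_mul_le {d : ℕ} (A B : Matrix (Fin d) (Fin d) ℝ) :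
    frob (A * B) ≤ frob A * frob B := by
  unfold frob
  have h0 : 0 ≤ ∑ i, ∑ j, (A i j) ^ 2 :=
    Finset.sum_nonneg fun i _ => Finset.sum_nonneg fun j _ => sq_nonneg _
  refine le_of_le_of_eq ?_ (Real.sqrt_mul h0 _)
  apply Real.sqrt_le_sqrt
  rw [Finset.sum_mul]
  apply Finset.sum_le_sum
  intro i _
  rw [Finset.sum_comm (f := fun i j => B i j ^ 2), Finset.mul_sum]
  apply Finset.sum_le_sum
  intro j _
  rw [Matrix.mul_apply]
  exact Finset.sum_mul_sq_le_sq_mul_sq _ _ _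

theorem frob_tril_le {d : ℕ} (A : Matrix (Fin d) (Fin d) ℝ) : frob (tril A) ≤ frob A := by
  unfold frob
  apply Real.sqrt_le_sqrt
  apply Finset.sum_le_sum
  intro i _
  apply Finset.sum_le_sum
  intro j _
  unfold tril
  split_ifs
  · exact le_rfl
  · nlinarith [sq_nonneg (A i j)]
  · nlinarith [sq_nonneg (A i j)]

theorem frob_transpose_eq {d : ℕ} (A : Matrix (Fin d) (Fin d) ℝ) : frob Aᵀ = frob A := by
  unfold frob
  rw [Finset.sum_comm]
  rfl

/-- for any real `d×d` matrices `C` and `K`,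
`‖C · tril[Cᵀ K]‖_F ≤ √(5/2) · ‖C‖_F² · ‖K‖_F`. -/
theorem frobenius_mul_tril_le {d : ℕ} (C K : Matrix (Fin d) (Fin d) ℝ) :
    frob (C * tril (Cᵀ * K)) ≤ Real.sqrt (5 / 2) * (frob C) ^ 2 * frob K := by
  have n (A : Matrix (Fin d) (Fin d) ℝ) : 0 ≤ frob A := Real.sqrt_nonneg _
  have h1 := frob_mul_le C (tril (Cᵀ * K))
  have h2 := frob_tril_le (Cᵀ * K)
  have h3 := frob_mul_le Cᵀ K
  rw [frob_transpose_eq] at h3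
  have h4 := mul_le_mul_of_nonneg_left (h2.trans h3) (n C)
  have h5 : (1 : ℝ) ≤ Real.sqrt (5 / 2) := by
    rw [Real.one_le_sqrt]; norm_num
  have h6 : 0 ≤ frob C ^ 2 * frob K := mul_nonneg (sq_nonneg _) (n K)
  nlinarith [mul_le_mul_of_nonneg_right h5 h6]

end
end

section
/- Let C ∈ ℝ^{d×d}, let H ∈ ℝ^{d×d} be symmetric, let α ∈ ℝ, and set W = Cᵀ H C. Then the square-root variational Newton covariance update satisfies the exact identity (C − α·C·tril[W − I])·(C − α·C·tril[W − I])ᵀ = C·( I + α(I − W) + (α²/4)·(I − 2W + 4·tril[W]·tril[W]ᵀ) )·Cᵀ; in particular the updated covariance equals C((1+α)I − αW)Cᵀ up to a term of order α². -/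
open Matrix

noncomputable section

/-- exact identity for the square-root variational Newton covariance update:
with `W = Cᵀ H C` (`H` symmetric),
`(C − α·C·tril[W − I])·(C − α·C·tril[W − I])ᵀ
  = C·(I + α(I − W) + (α²/4)·(I − 2W + 4·tril[W]·tril[W]ᵀ))·Cᵀ`. -/
theorem srvn_covariance_update_identity {d : ℕ}
    (C H : Matrix (Fin d) (Fin d) ℝ) (hH : Hᵀ = H) (α : ℝ)
    (W : Matrix (Fin d) (Fin d) ℝ) (hW : W = Cᵀ * H * C) :
    (C - α • (C * tril (W - 1))) * (C - α • (C * tril (W - 1)))ᵀ =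
      C * (1 + α • ((1 : Matrix (Fin d) (Fin d) ℝ) - W) +
        (α ^ 2 / 4) • ((1 : Matrix (Fin d) (Fin d) ℝ) - (2 : ℝ) • W +
          (4 : ℝ) • (tril W * (tril W)ᵀ))) * Cᵀ := by
  have hWt : Wᵀ = W := by
    rw [hW]; simp [Matrix.transpose_mul, hH, Matrix.mul_assoc]
  have h1 : tril (W - 1) = tril W - (1 / 2 : ℝ) • (1 : Matrix (Fin d) (Fin d) ℝ) := by
    ext i j
    simp only [tril, Matrix.sub_apply, Matrix.smul_apply, Matrix.one_apply, smul_eq_mul, Fin.ext_iff]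
    split_ifs <;> first | omega | ring
  have h2 : W = tril W + (tril W)ᵀ := by
    ext i j
    have hs : W j i = W i j := congrFun (congrFun hWt i) j
    simp only [tril, Matrix.add_apply, Matrix.transpose_apply]
    rw [hs]
    split_ifs <;> first | omega | ring
  rw [h1]
  generalize tril W = L at h2
  have h3 : C - α • (C * (L - (1 / 2 : ℝ) • (1 : Matrix (Fin d) (Fin d) ℝ))) =
      C * (1 - α • (L - (1 / 2 : ℝ) • (1 : Matrix (Fin d) (Fin d) ℝ))) := by
    rw [Matrix.mul_sub C 1, Matrix.mul_one, Matrix.mul_smul]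
  rw [h3, Matrix.transpose_mul, Matrix.mul_assoc, Matrix.mul_assoc,
    ← Matrix.mul_assoc _ _ Cᵀ]
  congr 2
  rw [h2]
  simp only [Matrix.transpose_sub, Matrix.transpose_smul, Matrix.transpose_one, Matrix.sub_mul,
    Matrix.mul_sub, Matrix.smul_mul, Matrix.mul_smul, Matrix.mul_one, Matrix.one_mul]
  module

end
end

section
/- Let C ∈ ℝ^{d×d} be lower triangular with CCᵀ ≽ λ_min·I for some λ_min > 0. Then for every lower-triangular X ∈ ℝ^{d×d}, the quadratic form of the natural-gradient preconditioner is coercive: tr(Xᵀ · C · tril[Cᵀ X]) ≥ (λ_min/2)·‖X‖_F². -/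
open Matrix

noncomputable section

lemma dot_cs {d : ℕ} (u v : Fin d → ℝ) : (u ⬝ᵥ v) ^ 2 ≤ (u ⬝ᵥ u) * (v ⬝ᵥ v) := by
  have h := Finset.sum_mul_sq_le_sq_mul_sq Finset.univ u v
  simpa [dotProduct, pow_two] using h

lemma dot_nn {d : ℕ} (u : Fin d → ℝ) : 0 ≤ u ⬝ᵥ u :=
  Finset.sum_nonneg fun i _ => mul_self_nonneg (u i)

lemma quad_bound {a b t lam : ℝ} (ha : 0 ≤ a) (ht : 0 ≤ t) (hlam : 0 < lam)
    (h1 : a ^ 2 ≤ t * b) (h2 : lam * b ≤ a) : lam * a ≤ t := by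
  rcases ha.eq_or_lt with h | h
  · rw [← h]; simpa using ht
  · have : lam * a * a ≤ t * a := by nlinarith
    exact le_of_mul_le_mul_right this h

lemma trailing {d : ℕ}
    (C : Matrix (Fin d) (Fin d) ℝ) (hlow : ∀ i j : Fin d, i < j → C i j = 0)
    (lam : ℝ) (hlam : 0 < lam)
    (hpsd : (C * Cᵀ - lam • (1 : Matrix (Fin d) (Fin d) ℝ)).PosSemidef)
    (j : Fin d) (y : Fin d → ℝ) (hy : ∀ i, i < j → y i = 0) :
    lam * (y ⬝ᵥ y) ≤ ∑ i, if j ≤ i then ((Cᵀ *ᵥ y) i) ^ 2 else 0 := by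
  have hC : ∀ w : Fin d → ℝ, lam * (w ⬝ᵥ w) ≤ (Cᵀ *ᵥ w) ⬝ᵥ (Cᵀ *ᵥ w) := by
    intro w
    have h := hpsd.dotProduct_mulVec_nonneg w
    have e : (Cᵀ *ᵥ w) ⬝ᵥ (Cᵀ *ᵥ w) = w ⬝ᵥ ((C * Cᵀ) *ᵥ w) := by
      rw [← Matrix.mulVec_mulVec, Matrix.dotProduct_mulVec w C, ← Matrix.mulVec_transpose]
    rw [e]
    simp only [star_trivial, Matrix.sub_mulVec, Matrix.smul_mulVec, Matrix.one_mulVec,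
      dotProduct_sub, dotProduct_smul, smul_eq_mul] at h
    linarith
  have hdet : IsUnit C.det := by
    rw [isUnit_iff_ne_zero, ← Matrix.det_transpose]
    intro h0
    obtain ⟨v, hv, hv0⟩ := Matrix.exists_mulVec_eq_zero_iff.mpr h0
    have h := hC v
    rw [hv0] at h
    simp only [dotProduct_zero] at h
    have h3 := dot_nn v
    have : v ⬝ᵥ v = 0 := by nlinarith
    exact hv (dotProduct_self_eq_zero.mp this)
  have hinv : ∀ i k : Fin d, i < k → C⁻¹ i k = 0 := by
    have : Invertible C := Matrix.invertibleOfIsUnitDet C hdet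
    have hb : C.BlockTriangular OrderDual.toDual := fun a b hab => hlow a b hab
    exact fun a b hab => Matrix.blockTriangular_inv_of_blockTriangular hb hab
  set z := C⁻¹ *ᵥ y with hz
  have hCz : C *ᵥ z = y := by
    rw [hz, Matrix.mulVec_mulVec, Matrix.mul_nonsing_inv _ hdet, Matrix.one_mulVec]
  have hzs : ∀ i, i < j → z i = 0 := by
    intro i hi
    change ∑ k, C⁻¹ i k * y k = 0
    refine Finset.sum_eq_zero fun k _ => ?_
    rcases lt_or_ge k j with hk | hk
    · simp [hy k hk]
    · simp [hinv i k (hi.trans_le hk)]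
  -- bound on z
  have hzb : lam * (z ⬝ᵥ z) ≤ y ⬝ᵥ y := by
    set w := (Cᵀ)⁻¹ *ᵥ z with hw
    have hCw : Cᵀ *ᵥ w = z := by
      rw [hw, Matrix.mulVec_mulVec, Matrix.mul_nonsing_inv _ (by rwa [Matrix.det_transpose]),
        Matrix.one_mulVec]
    have h1 := hC w
    rw [hCw] at h1
    have e : z ⬝ᵥ z = y ⬝ᵥ w := by
      have e1 : w ⬝ᵥ (C *ᵥ z) = (Cᵀ *ᵥ w) ⬝ᵥ z := by
        rw [Matrix.dotProduct_mulVec, ← Matrix.mulVec_transpose]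
      rw [hCz, hCw] at e1
      rw [← e1, dotProduct_comm]
    refine quad_bound (b := w ⬝ᵥ w) (dot_nn z) (dot_nn y) hlam ?_ h1
    rw [e]; exact dot_cs y w
  set p : Fin d → ℝ := fun i => if j ≤ i then (Cᵀ *ᵥ y) i else 0 with hp
  have hpp : (∑ i, if j ≤ i then ((Cᵀ *ᵥ y) i) ^ 2 else 0) = p ⬝ᵥ p := by
    refine Finset.sum_congr rfl fun i _ => ?_
    simp only [hp]; split_ifs <;> ring
  rw [hpp]
  have e : y ⬝ᵥ y = p ⬝ᵥ z := by
    have : y ⬝ᵥ y = (Cᵀ *ᵥ y) ⬝ᵥ z := by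
      rw [Matrix.mulVec_transpose, ← Matrix.dotProduct_mulVec, hCz]
    rw [this]
    refine Finset.sum_congr rfl fun i _ => ?_
    simp only [hp]; split_ifs with h
    · rfl
    · simp [hzs i (not_le.mp h)]
  refine quad_bound (b := z ⬝ᵥ z) (dot_nn y) (dot_nn p) hlam ?_ hzb
  rw [e]; exact dot_cs p z

/-- if `C` is lower triangular with `CCᵀ ≽ λ_min·I` (`λ_min > 0`), then for every
lower-triangular `X`, `tr(Xᵀ · C · tril[Cᵀ X]) ≥ (λ_min/2)·‖X‖_F²`. -/
theorem natural_gradient_preconditioner_coercive {d : ℕ}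
    (C : Matrix (Fin d) (Fin d) ℝ) (hlow : ∀ i j : Fin d, i < j → C i j = 0)
    (lam : ℝ) (hlam : 0 < lam)
    (hpsd : (C * Cᵀ - lam • (1 : Matrix (Fin d) (Fin d) ℝ)).PosSemidef) :
    ∀ X : Matrix (Fin d) (Fin d) ℝ, (∀ i j : Fin d, i < j → X i j = 0) →
      lam / 2 * (frob X) ^ 2 ≤ (Xᵀ * (C * tril (Cᵀ * X))).trace := by
  intro X hX
  have hf : (frob X) ^ 2 = ∑ j, (fun i => X i j) ⬝ᵥ (fun i => X i j) := by
    have h0 : 0 ≤ ∑ i, ∑ j, (X i j) ^ 2 :=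
      Finset.sum_nonneg fun i _ => Finset.sum_nonneg fun j _ => sq_nonneg _
    rw [frob, Real.sq_sqrt h0, Finset.sum_comm]
    simp [dotProduct, pow_two]
  have ht : (Xᵀ * (C * tril (Cᵀ * X))).trace
      = ∑ j, ∑ i, (Cᵀ * X) i j * tril (Cᵀ * X) i j := by
    rw [← Matrix.mul_assoc]
    have : Xᵀ * C = (Cᵀ * X)ᵀ := by simp [Matrix.transpose_mul]
    rw [this]
    rfl
  rw [hf, ht, Finset.mul_sum]
  refine Finset.sum_le_sum fun j _ => ?_
  have h := trailing C hlow lam hlam hpsd j (fun i => X i j) (fun i hi => hX i j hi)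
  have h2 : (1 / 2) * (∑ i, if j ≤ i then ((Cᵀ *ᵥ (fun i => X i j)) i) ^ 2 else 0)
      ≤ ∑ i, (Cᵀ * X) i j * tril (Cᵀ * X) i j := by
    rw [Finset.mul_sum]
    refine Finset.sum_le_sum fun i _ => ?_
    have e : (Cᵀ *ᵥ (fun i => X i j)) i = (Cᵀ * X) i j := rfl
    rw [e]
    generalize hA : Cᵀ * X = A
    have := sq_nonneg (A i j)
    rcases lt_trichotomy i j with hij | hij | hij
    · have h1 : ¬ (j : ℕ) < i := by have : (i : ℕ) < j := hij; omega
      have h2 : ¬ (i : ℕ) = j := by have : (i : ℕ) < j := hij; omega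
      simp [tril, h1, h2, not_le.mpr hij]
    · subst hij
      simp only [tril, le_refl, if_true, lt_irrefl, if_false]
      nlinarith
    · have h1 : (j : ℕ) < i := hij
      simp only [tril, h1, hij.le, if_true]
      nlinarith
  linarith

end
end
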